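/- Fix an integer n ≥ 100 and set ν = 1/n. Let I = [−ν, 1+ν] and J = [−2/3, −1/3] be the corresponding disjoint closed arcs of S¹ = ℝ/2ℤ (identified with real intervals). Let G(ω,x) = (σω, g_ω(x)) be a skew product over the Bernoulli shift whose fiber maps g_ω are orientation-preserving C¹ diffeomorphisms of S¹, depending continuously on ω in the C⁰ topology, and satisfying for every ω ∈ Σ²: (i) g_ω(I) ⊆ I; on I the derivative of g_ω lies in [1−ν, 1) if ω₀ = 0 and in (0, 1/4] if ω₀ = 1, and moreover g_ω(−ν) > 3/4 whenever ω₀ = 1; (ii) g_ω^{−1}(J) ⊆ J and the derivative of g_ω is everywhere greater than 1 + ν/2 on J; (iii) g_ω(x) ≥ x + ν²/4 for all x ∈ [−1/3, −ν], and g_ω(x) ≤ x − ν²/4 for all x ∈ [1+ν, 4/3]. Then the open set V = π^{−1}((0, 1/4)) is 2^{−n}-invisible for G with respect to the product measure P × Leb on Σ² × S¹. -/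

import Mathlib

open MeasureTheory Set Filter Topology

instance : Fact ((0 : ℝ) < 2) := ⟨by norm_num⟩

/-- The circle `S¹ = ℝ/2ℤ`. -/
abbrev S1 := AddCircle (2 : ℝ)

/-- The space `Σ² = {0,1}^ℤ` of bi-infinite binary sequences (`false` = 0, `true` = 1). -/
abbrev Sig2 := ℤ → Bool

/-- The Bernoulli shift `(σω)_k = ω_{k+1}`. -/
def shift (ω : Sig2) : Sig2 := fun k => ω (k + 1)

/-- The skew product `G(ω,x) = (σω, g_ω(x))` over the Bernoulli shift. -/
def skew (g : Sig2 → S1 ≃ₜ S1) (p : Sig2 × S1) : Sig2 × S1 :=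
  (shift p.1, g p.1 p.2)

/-- The average frequency with which the first `N` points of the orbit of `p` visit `V`. -/
noncomputable def visitFreq {X : Type*} (F : X → X) (V : Set X) (p : X) (N : ℕ) : ℝ :=
  (∑ k ∈ Finset.range N, V.indicator (fun _ => (1 : ℝ)) (F^[k] p)) / N

/-!
A visit to `(0, 1/4)` is expensive. Inside the invariant arc `I = [-ν, 1 + ν]` the symbol `1` throws
every point beyond `3/4`, and the symbol `0` contracts the distance to `-ν` at most by the factor
`1 - ν`; since `(1 - ν) ^ (n - 1) > 1/3`, an orbit in `I` can be in `(0, 1/4)` only if the last `n`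
symbols read were all `0`. By the law of large numbers, applied to disjoint windows of length `n` in
each residue class mod `n`, this happens with frequency `2⁻ⁿ`.

Almost every orbit does enter `I`: on `J` the fibre maps expand, so in each fibre at most one point
stays in `J` forever, and by the drift condition an orbit outside `J` reaches `I` in finitely many
steps.
-/

section Circle

variable {p a b c : ℝ}

/-- The arc of the circle `ℝ/pℤ` traced by the real interval `[a, b]`. -/
abbrev arc (p a b : ℝ) : Set (AddCircle p) := (fun x : ℝ => (x : AddCircle p)) '' Icc a b

/-- `ℓ : ℝ → ℝ` is a lift of the circle map `f` to the universal cover. Neither continuity nor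
monotonicity is part of the notion. -/
def IsLift (ℓ : ℝ → ℝ) (f : AddCircle p → AddCircle p) : Prop :=
  ∀ x : ℝ, (ℓ x : AddCircle p) = f x

lemma arc_subset_arc {a' b' : ℝ} (ha : a' ≤ a) (hb : b ≤ b') : arc p a b ⊆ arc p a' b' :=
  image_mono (Icc_subset_Icc ha hb)

lemma isClosed_arc [Fact (0 < p)] : IsClosed (arc p a b) :=
  (isCompact_Icc.image (AddCircle.continuous_mk' p)).isClosed

lemma exists_add_zsmul_eq_of_coe_eq {x y : ℝ} (h : (x : AddCircle p) = y) :
    ∃ m : ℤ, x + m • p = y := by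
  rw [eq_comm, ← sub_eq_zero, ← AddCircle.coe_sub, AddCircle.coe_eq_zero_iff] at h
  exact h.imp fun m hm => by rw [hm]; ring

lemma eq_of_coe_eq_of_abs_sub_lt {x y : ℝ} (h : (x : AddCircle p) = y) (hlt : |x - y| < p) :
    x = y := by
  have : Fact (0 < p) := ⟨(abs_nonneg _).trans_lt hlt⟩
  rw [← sub_eq_zero, ← AddCircle.coe_sub, AddCircle.coe_eq_zero_iff] at h
  obtain ⟨m, hm⟩ := h
  have hp : 0 < p := Fact.out
  rw [← hm, zsmul_eq_mul, abs_mul, abs_of_pos hp, mul_lt_iff_lt_one_left hp] at hlt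
  have hm0 : m = 0 := Int.abs_lt_one_iff.1 (by exact_mod_cast hlt)
  rw [hm0, zero_smul] at hm
  exact sub_eq_zero.1 hm.symm

lemma mem_Icc_of_coe_mem_arc {t : ℝ} (ht : (t : AddCircle p) ∈ arc p a b)
    (hbt : b - p < t) (hta : t < a + p) : t ∈ Icc a b := by
  obtain ⟨x, hx, hxt⟩ := ht
  rwa [← eq_of_coe_eq_of_abs_sub_lt hxt (abs_lt.2 ⟨by linarith [hx.1], by linarith [hx.2]⟩)]

lemma disjoint_coe_image_arc {s : Set ℝ} (hs : s ⊆ Ioo (b - p) a) (hp : 0 ≤ p) :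
    Disjoint ((fun x : ℝ => (x : AddCircle p)) '' s) (arc p a b) := by
  refine disjoint_left.2 ?_
  rintro _ ⟨x, hx, rfl⟩ hxarc
  have hax := mem_Icc_of_coe_mem_arc hxarc (hs hx).1 (by linarith [(hs hx).2])
  exact hax.1.not_gt (hs hx).2

lemma exists_mem_Ioo_coe_eq_of_notMem_arc [Fact (0 < p)] {u : AddCircle p}
    (hu : u ∉ arc p a b) : ∃ t ∈ Ioo b (a + p), (t : AddCircle p) = u := by
  obtain ⟨t, ht, rfl⟩ := (AddCircle.coe_image_Ico_eq p a).ge (mem_univ u)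
  exact ⟨t, ⟨not_le.1 fun htb => hu ⟨t, ⟨ht.1, htb⟩, rfl⟩, ht.2⟩, rfl⟩

lemma dist_coe_eq_abs_sub {x y : ℝ} (hp : p ≠ 0) (h : |x - y| ≤ |p| / 2) :
    dist (x : AddCircle p) y = |x - y| := by
  rw [dist_eq_norm, ← AddCircle.coe_sub, AddCircle.norm_coe_eq_abs_iff _ hp]
  exact h

lemma IsLift.add_zsmul {ℓ : ℝ → ℝ} {f : AddCircle p → AddCircle p} (h : IsLift ℓ f) (m : ℤ) :
    IsLift (fun x => ℓ x + m • p) f := fun x => by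
  rw [AddCircle.coe_add, AddCircle.coe_zsmul, AddCircle.coe_period, smul_zero, add_zero, h x]

lemma mapsTo_Icc_of_coe_mapsTo_arc {L : ℝ → ℝ} {s : Set ℝ} {x₀ : ℝ} (hba : b < a + p)
    (hs : IsPreconnected s) (hL : ContinuousOn L s)
    (harc : MapsTo (fun x => (L x : AddCircle p)) s (arc p a b))
    (hx₀ : x₀ ∈ s) (hLx₀ : L x₀ ∈ Icc a b) : MapsTo L s (Icc a b) := by
  have hIcc : ∀ y ∈ L '' s, y ∈ Ioo (b - p) (a + p) → y ∈ Icc a b := by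
    rintro _ ⟨x, hx, rfl⟩ hy
    exact mem_Icc_of_coe_mem_arc (harc hx) hy.1 hy.2
  have hab : Icc a b ⊆ Ioo (b - p) (a + p) := fun y hy =>
    ⟨by linarith [hy.1], by linarith [hy.2]⟩
  have hinter : L '' s ∩ (Ioo (b - p) (a + p) ∩ (Icc a b)ᶜ) = ∅ :=
    eq_empty_of_forall_notMem fun y hy => hy.2.2 (hIcc y hy.1 hy.2.1)
  rcases isPreconnected_iff_subset_of_disjoint.1 (hs.image L hL) _ _ isOpen_Ioo
    isClosed_Icc.isOpen_compl (fun y _ => (em (y ∈ Icc a b)).imp_left (hab ·)) hinter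
    with hsub | hsub
  · exact fun x hx => hIcc _ (mem_image_of_mem L hx) (hsub (mem_image_of_mem L hx))
  · exact absurd hLx₀ (hsub (mem_image_of_mem L hx₀))

lemma IsLift.exists_mapsTo_Icc {ℓ : ℝ → ℝ} {f : AddCircle p → AddCircle p} (hℓ : IsLift ℓ f)
    (hcont : Continuous ℓ) (hab : a ≤ b) (hba : b < a + p)
    (hf : MapsTo f (arc p a b) (arc p a b)) :
    ∃ m : ℤ, MapsTo (fun x => ℓ x + m • p) (Icc a b) (Icc a b) := by
  obtain ⟨t, ht, hta⟩ := hf ⟨a, left_mem_Icc.2 hab, rfl⟩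
  obtain ⟨m, hm⟩ := exists_add_zsmul_eq_of_coe_eq ((hℓ a).trans hta.symm)
  refine ⟨m, mapsTo_Icc_of_coe_mapsTo_arc hba isPreconnected_Icc (by fun_prop) (fun x hx => ?_)
    (left_mem_Icc.2 hab) (hm ▸ ht)⟩
  exact mem_of_eq_of_mem (hℓ.add_zsmul m x) (hf ⟨x, hx, rfl⟩)

lemma IsLift.mapsTo_arc_of_monotone {ℓ : ℝ → ℝ} {f : AddCircle p → AddCircle p}
    (hℓ : IsLift ℓ f) (hcont : Continuous ℓ) (hmono : Monotone ℓ) (hab : a ≤ b)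
    (hba : b < a + p) (hf : MapsTo f (arc p a b) (arc p a b)) (hac : a ≤ c)
    (hfa : f a ∈ arc p c b) : MapsTo f (arc p a b) (arc p c b) := by
  obtain ⟨m, hm⟩ := hℓ.exists_mapsTo_Icc hcont hab hba hf
  have hLa : ℓ a + m • p ∈ Icc a b := hm (left_mem_Icc.2 hab)
  have hcLa : c ≤ ℓ a + m • p :=
    (mem_Icc_of_coe_mem_arc (by rwa [hℓ.add_zsmul m a]) (by linarith [hLa.1])
      (by linarith [hLa.2])).1
  rintro _ ⟨x, hx, rfl⟩
  exact ⟨ℓ x + m • p, ⟨hcLa.trans (by linarith [hmono hx.1]), (hm hx).2⟩, hℓ.add_zsmul m x⟩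

lemma IsLift.mapsTo_arc_of_le_deriv {ℓ : ℝ → ℝ} {f : AddCircle p → AddCircle p} {s C : ℝ}
    (hℓ : IsLift ℓ f) (hdiff : Differentiable ℝ ℓ) (hba : b < a + p)
    (hf : MapsTo f (arc p a b) (arc p a b)) (hC : 0 ≤ C)
    (hderiv : ∀ x ∈ Icc a b, C ≤ deriv ℓ x) (has : a ≤ s) :
    MapsTo f (arc p s b) (arc p (a + C * (s - a)) b) := by
  rintro _ ⟨x, hx, rfl⟩
  have hax : a ≤ x := has.trans hx.1
  have hab : a ≤ b := hax.trans hx.2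
  obtain ⟨m, hm⟩ := hℓ.exists_mapsTo_Icc hdiff.continuous hab hba hf
  have hgrow : C * (x - a) ≤ ℓ x - ℓ a :=
    (convex_Icc a b).mul_sub_le_image_sub_of_le_deriv hdiff.continuous.continuousOn
      hdiff.differentiableOn (fun y hy => hderiv y (interior_subset hy)) a (left_mem_Icc.2 hab) x
      ⟨hax, hx.2⟩ hax
  have hsx : C * (s - a) ≤ C * (x - a) := by gcongr; exact hx.1
  have hLa : a ≤ ℓ a + m • p := (hm (left_mem_Icc.2 hab)).1
  exact ⟨ℓ x + m • p, ⟨by linarith, (hm ⟨hax, hx.2⟩).2⟩, hℓ.add_zsmul m x⟩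

-- Between `c - p` and `c` a degree-one monotone lift moves by exactly one period, so it cannot
-- wind around the circle on `[a, b]`.
lemma IsLift.exists_forall_mem_Icc {ℓ : ℝ → ℝ} {f : AddCircle p → AddCircle p} [Fact (0 < p)]
    (hℓ : IsLift ℓ f) (hmono : Monotone ℓ) (hdeg : ∀ x, ℓ (x + p) = ℓ x + p) {u : AddCircle p}
    (hu : u ∉ arc p a b) (hfu : f u ∉ arc p a b) :
    ∃ m : ℤ, ∀ x ∈ Icc a b, f x ∈ arc p a b → ℓ x + m • p ∈ Icc a b := by
  obtain ⟨c, hc, rfl⟩ := exists_mem_Ioo_coe_eq_of_notMem_arc hu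
  obtain ⟨t, ht, htc⟩ := exists_mem_Ioo_coe_eq_of_notMem_arc hfu
  obtain ⟨m, rfl⟩ := exists_add_zsmul_eq_of_coe_eq ((hℓ c).trans htc.symm)
  refine ⟨m, fun x hx hfx => mem_Icc_of_coe_mem_arc (by rwa [hℓ.add_zsmul m x]) ?_ ?_⟩
  · have hlow : ℓ c - p ≤ ℓ x := by
      rw [sub_le_iff_le_add, ← hdeg]
      exact hmono (by linarith [hx.1, hc.2])
    linarith [ht.1]
  · have hupp : ℓ x ≤ ℓ c := hmono (by linarith [hx.2, hc.1])
    linarith [ht.2]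

lemma IsLift.mul_dist_le_dist {ℓ : ℝ → ℝ} {f : AddCircle p → AddCircle p} [Fact (0 < p)]
    {C : ℝ} (hℓ : IsLift ℓ f) (hmono : Monotone ℓ) (hdeg : ∀ x, ℓ (x + p) = ℓ x + p)
    (hdiff : Differentiable ℝ ℓ) (hderiv : ∀ x ∈ Icc a b, C ≤ deriv ℓ x) (hba : b - a ≤ p / 2)
    {u v w : AddCircle p} (hw : w ∉ arc p a b) (hfw : f w ∉ arc p a b)
    (hu : u ∈ arc p a b) (hv : v ∈ arc p a b)
    (hfu : f u ∈ arc p a b) (hfv : f v ∈ arc p a b) : C * dist u v ≤ dist (f u) (f v) := by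
  obtain ⟨m, hm⟩ := hℓ.exists_forall_mem_Icc hmono hdeg hw hfw
  have hp : 0 < p := Fact.out
  have hdist : ∀ {x y : ℝ}, x ∈ Icc a b → y ∈ Icc a b → dist (x : AddCircle p) y = |x - y| :=
    fun hx hy => dist_coe_eq_abs_sub hp.ne' <| by
      rw [abs_of_pos hp]; exact (abs_sub_le_of_le_of_le hx.1 hx.2 hy.1 hy.2).trans hba
  obtain ⟨x, hx, rfl⟩ := hu
  obtain ⟨y, hy, rfl⟩ := hv
  have hgrow : ∀ x ∈ Icc a b, ∀ y ∈ Icc a b, x ≤ y → C * (y - x) ≤ ℓ y - ℓ x :=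
    (convex_Icc a b).mul_sub_le_image_sub_of_le_deriv hdiff.continuous.continuousOn
      hdiff.differentiableOn fun z hz => hderiv z (interior_subset hz)
  rw [hdist hx hy, ← hℓ.add_zsmul m x, ← hℓ.add_zsmul m y, hdist (hm x hx hfu) (hm y hy hfv),
    add_sub_add_right_eq_sub]
  rcases le_total x y with hxy | hyx
  · rw [abs_sub_comm, abs_of_nonneg (sub_nonneg.2 hxy), abs_sub_comm]
    exact (hgrow x hx y hy hxy).trans (le_abs_self _)
  · rw [abs_of_nonneg (sub_nonneg.2 hyx)]
    exact (hgrow y hy x hx hyx).trans (le_abs_self _)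

instance [Fact (0 < p)] : NullSingletonClass (volume : Measure (AddCircle p)) where
  measure_singleton x := by
    rw [← Metric.closedBall_zero, AddCircle.volume_closedBall]
    have hp : 0 < p := Fact.out
    simp [hp.le]

end Circle

section SkewProduct

variable {B E : Type*} {T : B → B} {f : B → E → E}

/-- The skew product over an arbitrary base map `T`, with fibre maps `f b` that need not be
invertible; `skew` is the case of homeomorphisms over the shift. -/
def skewProduct (T : B → B) (f : B → E → E) (p : B × E) : B × E := (T p.1, f p.1 p.2)

lemma skewProduct_iterate_fst (k : ℕ) (p : B × E) :
    ((skewProduct T f)^[k] p).1 = T^[k] p.1 :=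
  (Function.Semiconj.iterate_right (f := Prod.fst) (fun _ => rfl) k).eq p

lemma skewProduct_iterate_succ_snd (k : ℕ) (p : B × E) :
    ((skewProduct T f)^[k + 1] p).2 = f (T^[k] p.1) ((skewProduct T f)^[k] p).2 := by
  rw [Function.iterate_succ_apply', ← skewProduct_iterate_fst (f := f)]
  rfl

lemma skewProduct_iterate_snd_mem {s : Set E} (hs : ∀ b, MapsTo (f b) s s) {p : B × E}
    (hp : p.2 ∈ s) (k : ℕ) : ((skewProduct T f)^[k] p).2 ∈ s :=
  MapsTo.iterate (s := Prod.snd ⁻¹' s) (fun q hq => hs q.1 hq) k hp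

lemma exists_skewProduct_iterate_snd_mem_of_shrinking {D : ℝ → Set E} {R R' δ : ℝ} (hδ : 0 < δ)
    (hD : ∀ b, ∀ r ∈ Icc R R', MapsTo (f b) (D r) (D (max R (r - δ)))) (hR : R ≤ R')
    {p : B × E} (hp : p.2 ∈ D R') : ∃ k, ((skewProduct T f)^[k] p).2 ∈ D R := by
  have hmem : ∀ k : ℕ, ((skewProduct T f)^[k] p).2 ∈ D (max R (R' - k * δ)) := by
    intro k
    induction k with
    | zero => simpa [hR] using hp
    | succ k ih =>
      have hr : max R (R' - k * δ) ∈ Icc R R' :=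
        ⟨le_max_left _ _, max_le hR (by linarith [mul_nonneg k.cast_nonneg hδ.le])⟩
      have hstep : max R (max R (R' - k * δ) - δ) = max R (R' - (k + 1 : ℕ) * δ) := by
        rw [← max_sub_sub_right, ← max_assoc, max_eq_left (by linarith : R - δ ≤ R)]
        push_cast
        ring_nf
      rw [skewProduct_iterate_succ_snd, ← hstep]
      exact hD _ _ hr ih
  obtain ⟨k, hk⟩ := exists_nat_gt ((R' - R) / δ)
  rw [div_lt_iff₀ hδ] at hk
  exact ⟨k, by simpa only [max_eq_left (by linarith : R' - k * δ ≤ R)] using hmem k⟩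

section Expansion

variable [MetricSpace E] {s : Set E} {κ : ℝ}

lemma pow_mul_dist_le_dist_skewProduct_iterate (hκ : 0 ≤ κ)
    (hexp : ∀ b, ∀ x ∈ s, ∀ y ∈ s, f b x ∈ s → f b y ∈ s → κ * dist x y ≤ dist (f b x) (f b y))
    {b : B} {x y : E} (hx : ∀ k, ((skewProduct T f)^[k] (b, x)).2 ∈ s)
    (hy : ∀ k, ((skewProduct T f)^[k] (b, y)).2 ∈ s) (k : ℕ) :
    κ ^ k * dist x y ≤
      dist ((skewProduct T f)^[k] (b, x)).2 ((skewProduct T f)^[k] (b, y)).2 := by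
  induction k with
  | zero => simp
  | succ k ih =>
    have hxk := hx (k + 1)
    have hyk := hy (k + 1)
    rw [skewProduct_iterate_succ_snd] at hxk hyk ⊢
    rw [skewProduct_iterate_succ_snd]
    calc κ ^ (k + 1) * dist x y = κ * (κ ^ k * dist x y) := by ring
      _ ≤ κ * dist ((skewProduct T f)^[k] (b, x)).2 ((skewProduct T f)^[k] (b, y)).2 := by gcongr
      _ ≤ _ := hexp _ _ (hx k) _ (hy k) hxk hyk

lemma subsingleton_setOf_forall_skewProduct_iterate_snd_mem (hs : Bornology.IsBounded s)
    (hκ : 1 < κ)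
    (hexp : ∀ b, ∀ x ∈ s, ∀ y ∈ s, f b x ∈ s → f b y ∈ s → κ * dist x y ≤ dist (f b x) (f b y))
    (b : B) : {x | ∀ k, ((skewProduct T f)^[k] (b, x)).2 ∈ s}.Subsingleton := by
  intro x hx y hy
  by_contra hxy
  obtain ⟨C, hC⟩ := Metric.isBounded_iff.1 hs
  obtain ⟨k, hk⟩ := pow_unbounded_of_one_lt (C / dist x y) hκ
  rw [div_lt_iff₀ (dist_pos.2 hxy)] at hk
  exact hk.not_ge ((pow_mul_dist_le_dist_skewProduct_iterate (by linarith) hexp hx hy k).trans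
    (hC (hx k) (hy k)))

lemma ae_exists_skewProduct_iterate_snd_notMem [MeasurableSpace B] [MeasurableSpace E]
    {P : Measure B} {μ : Measure E} [SFinite μ] [NullSingletonClass μ]
    (hf : Measurable (skewProduct T f)) (hsm : MeasurableSet s) (hs : Bornology.IsBounded s)
    (hκ : 1 < κ)
    (hexp : ∀ b, ∀ x ∈ s, ∀ y ∈ s, f b x ∈ s → f b y ∈ s → κ * dist x y ≤ dist (f b x) (f b y)) :
    ∀ᵐ p ∂P.prod μ, ∃ k, ((skewProduct T f)^[k] p).2 ∉ s := by
  have hmeas : MeasurableSet {p | ∀ k, ((skewProduct T f)^[k] p).2 ∈ s} := by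
    rw [ofPred_forall]
    exact MeasurableSet.iInter fun k => measurable_snd.comp (hf.iterate k) hsm
  have hnull : P.prod μ {p | ∀ k, ((skewProduct T f)^[k] p).2 ∈ s} = 0 :=
    (Measure.measure_prod_null hmeas).2 <| .of_forall fun b =>
      (subsingleton_setOf_forall_skewProduct_iterate_snd_mem hs hκ hexp b).measure_zero μ
  filter_upwards [compl_mem_ae_iff.2 hnull] with p hp
  simpa using hp

end Expansion

end SkewProduct

section ZeroRuns

variable {ι : Type*}

/-- The cylinder event that all the symbols with index in `s` vanish. -/
def zerosOn (s : Finset ι) : Set (ι → Bool) := {ω | ∀ i ∈ s, ω i = false}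

/-- The event that `n` consecutive symbols, starting at position `k`, vanish. -/
def zeroRun (n k : ℕ) : Set Sig2 := zerosOn (Finset.Ico (k : ℤ) (k + n))

lemma measurableSet_zerosOn (s : Finset ι) : MeasurableSet (zerosOn s) := by
  simp only [zerosOn, ofPred_forall]
  exact Finset.measurableSet_biInter s fun i _ =>
    measurableSet_eq_fun (measurable_pi_apply i) measurable_const

lemma biInter_zerosOn {κ : Type*} [DecidableEq ι] (S : Finset κ) (t : κ → Finset ι) :
    ⋂ j ∈ S, zerosOn (t j) = zerosOn (S.biUnion t) := by
  ext ω
  simp only [zerosOn, mem_iInter, mem_ofPred_eq, Finset.mem_biUnion]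
  exact ⟨fun h i ⟨j, hj, hi⟩ => h j hj i hi, fun h j hj i hi => h i ⟨j, hj, hi⟩⟩

lemma iIndepSet_zerosOn {κ : Type*} {P : Measure (ι → Bool)} {q : ENNReal} {t : κ → Finset ι}
    (hP : ∀ s : Finset ι, P (zerosOn s) = q ^ s.card)
    (ht : Pairwise (Function.onFun Disjoint t)) :
    ProbabilityTheory.iIndepSet (fun j => zerosOn (t j)) P := by
  classical
  rw [ProbabilityTheory.iIndepSet_iff_meas_biInter fun j => measurableSet_zerosOn (t j)]
  intro S
  simp only [biInter_zerosOn, hP, Finset.prod_pow_eq_pow_sum]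
  rw [Finset.card_biUnion fun i _ j _ hij => ht hij]

lemma pairwise_disjoint_Ico_mul_add (n r : ℕ) :
    Pairwise (Function.onFun Disjoint fun j : ℕ =>
      Finset.Ico ((n * j + r : ℕ) : ℤ) ((n * j + r : ℕ) + n)) := by
  intro i j hij
  have h := pairwise_disjoint_Ico_add_zsmul (r : ℤ) (n : ℤ) (Nat.cast_injective.ne hij)
  rw [Function.onFun, ← Finset.disjoint_coe, Finset.coe_Ico, Finset.coe_Ico]
  convert h using 2 <;> push_cast <;> ring

end ZeroRuns

section LawOfLargeNumbers

open ProbabilityTheory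

variable {Ω : Type*} [MeasurableSpace Ω] {P : Measure Ω} [IsProbabilityMeasure P]

lemma identDistrib_indicator_one {A B : Set Ω} (hA : MeasurableSet A) (hB : MeasurableSet B)
    (hAB : P A = P B) :
    IdentDistrib (A.indicator fun _ => (1 : ℝ)) (B.indicator fun _ => (1 : ℝ)) P P := by
  classical
  have mA : Measurable (A.indicator fun _ => (1 : ℝ)) := measurable_const.indicator hA
  have mB : Measurable (B.indicator fun _ => (1 : ℝ)) := measurable_const.indicator hB
  have hcompl : P Aᶜ = P Bᶜ := by rw [prob_compl_eq_one_sub hA, prob_compl_eq_one_sub hB, hAB]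
  refine ⟨mA.aemeasurable, mB.aemeasurable, Measure.ext fun s hs => ?_⟩
  rw [Measure.map_apply mA hs, Measure.map_apply mB hs, indicator_const_preimage_eq_union,
    indicator_const_preimage_eq_union]
  split_ifs <;> simp [hAB, hcompl]

lemma tendsto_average_indicator_of_iIndepSet {A : ℕ → Set Ω} (hA : ∀ j, MeasurableSet (A j))
    (hindep : iIndepSet A P) {c : ENNReal} (hc : ∀ j, P (A j) = c) :
    ∀ᵐ ω ∂P, Tendsto (fun M : ℕ =>
      (∑ j ∈ Finset.range M, (A j).indicator (fun _ => (1 : ℝ)) ω) / M) atTop (𝓝 c.toReal) := by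
  have hmean : ∫ ω, (A 0).indicator (fun _ => (1 : ℝ)) ω ∂P = c.toReal := by
    rw [integral_indicator_const _ (hA 0), measureReal_def, hc, smul_eq_mul, mul_one]
  rw [← hmean]
  exact strong_law_ae_real (fun j => (A j).indicator fun _ => (1 : ℝ))
    ((integrable_const 1).indicator (hA 0))
    (fun i j hij => (hindep.iIndepFun_indicator).indepFun hij)
    fun j => identDistrib_indicator_one (hA j) (hA 0) ((hc j).trans (hc 0).symm)

lemma tendsto_average_zeroRun {P : Measure Sig2} [IsProbabilityMeasure P] {q : ENNReal}
    (hP : ∀ s : Finset ℤ, P (zerosOn s) = q ^ s.card) (n r : ℕ) :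
    ∀ᵐ ω ∂P, Tendsto (fun M : ℕ =>
      (∑ j ∈ Finset.range M, (zeroRun n (n * j + r)).indicator (fun _ => (1 : ℝ)) ω) / M) atTop
      (𝓝 (q.toReal ^ n)) := by
  have h := tendsto_average_indicator_of_iIndepSet
    (fun j => measurableSet_zerosOn _)
    (iIndepSet_zerosOn hP (pairwise_disjoint_Ico_mul_add n r)) (c := q ^ n)
    (fun j => by simp [hP])
  rwa [ENNReal.toReal_pow] at h

end LawOfLargeNumbers

section SymbolicBase

variable {E : Type*} {f : Sig2 → E → E} {I : Set E} {A : ℕ → Set E}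

lemma shift_iterate_apply (k : ℕ) (ω : Sig2) (i : ℤ) : shift^[k] ω i = ω (i + k) := by
  induction k generalizing ω with
  | zero => simp
  | succ k ih =>
    rw [Function.iterate_succ_apply, ih, shift]
    congr 1
    push_cast
    ring

lemma skewProduct_shift_iterate_mem_of_true (hA : Monotone A) (hAI : ∀ i, A i ⊆ I)
    (htrue : ∀ ω : Sig2, ω 0 = true → MapsTo (f ω) I (A 0))
    (hfalse : ∀ ω : Sig2, ω 0 = false → ∀ i, MapsTo (f ω) (A i) (A (i + 1)))
    {p : Sig2 × E} (hp : p.2 ∈ I) (hp₀ : p.1 0 = true) (i : ℕ) :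
    ((skewProduct shift f)^[i + 1] p).2 ∈ A i := by
  induction i with
  | zero => exact htrue _ hp₀ hp
  | succ i ih =>
    rw [skewProduct_iterate_succ_snd]
    cases hω : shift^[i + 1] p.1 0 with
    | false => exact hfalse _ hω i ih
    | true => exact hA (Nat.zero_le _) (htrue _ hω (hAI i ih))

lemma mem_zeroRun_of_skewProduct_shift_iterate_mem (hA : Monotone A) (hAI : ∀ i, A i ⊆ I)
    (hI : ∀ ω, MapsTo (f ω) I I) (htrue : ∀ ω : Sig2, ω 0 = true → MapsTo (f ω) I (A 0))
    (hfalse : ∀ ω : Sig2, ω 0 = false → ∀ i, MapsTo (f ω) (A i) (A (i + 1)))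
    {n T k : ℕ} {V : Set E} (hV : Disjoint V (A (n - 1))) {p : Sig2 × E}
    (hpI : ((skewProduct shift f)^[T] p).2 ∈ I)
    (hpV : ((skewProduct shift f)^[n + (T + k)] p).2 ∈ V) : p.1 ∈ zeroRun n (T + k) := by
  intro i hi
  obtain ⟨hi₁, hi₂⟩ := Finset.mem_Ico.1 hi
  obtain ⟨j, rfl⟩ := Int.eq_ofNat_of_zero_le ((Int.natCast_nonneg (T + k)).trans hi₁)
  by_contra hω
  have hsymbol : ((skewProduct shift f)^[j] p).1 0 = true := by
    simpa [skewProduct_iterate_fst, shift_iterate_apply] using hω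
  have hjI : ((skewProduct shift f)^[j] p).2 ∈ I := by
    obtain ⟨l, rfl⟩ := Nat.exists_eq_add_of_le' (by omega : T ≤ j)
    rw [Function.iterate_add_apply]
    exact skewProduct_iterate_snd_mem hI hpI l
  have hmem := skewProduct_shift_iterate_mem_of_true hA hAI htrue hfalse hjI hsymbol
    (n + (T + k) - j - 1)
  rw [← Function.iterate_add_apply,
    (by omega : n + (T + k) - j - 1 + 1 + j = n + (T + k))] at hmem
  exact hV.notMem_of_mem_left hpV (hA (by omega) hmem)

end SymbolicBase

section BlockAverages

variable {a b : ℕ → ℝ} {c : ℝ} {n K : ℕ}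

lemma sum_range_mul (a : ℕ → ℝ) (n M : ℕ) :
    ∑ k ∈ Finset.range (n * M), a k =
      ∑ r ∈ Finset.range n, ∑ j ∈ Finset.range M, a (n * j + r) := by
  induction M with
  | zero => simp
  | succ M ih =>
    rw [Nat.mul_succ, Finset.sum_range_add, ih]
    simp only [Finset.sum_range_succ, Finset.sum_add_distrib]

lemma tendsto_average_mul_of_residues (hn : 0 < n)
    (hb : ∀ r < n, Tendsto (fun M : ℕ => (∑ j ∈ Finset.range M, b (n * j + r)) / M) atTop
      (𝓝 c)) :
    Tendsto (fun M : ℕ => (∑ k ∈ Finset.range (n * M), b k) / (n * M : ℕ)) atTop (𝓝 c) := by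
  have hlim : Tendsto (fun M : ℕ => (∑ r ∈ Finset.range n,
      (∑ j ∈ Finset.range M, b (n * j + r)) / M) / n) atTop (𝓝 ((∑ _r ∈ Finset.range n, c) / n)) :=
    (tendsto_finsetSum _ fun r hr => hb r (Finset.mem_range.1 hr)).div_const _
  have hc : (∑ _r ∈ Finset.range n, c) / n = c := by
    have hn' : (n : ℝ) ≠ 0 := by exact_mod_cast hn.ne'
    simp [hn']
  rw [hc] at hlim
  refine hlim.congr fun M => ?_
  rw [sum_range_mul, ← Finset.sum_div, div_div, Nat.cast_mul, mul_comm (M : ℝ)]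

lemma sum_range_le_add_sum_range_of_le_one (ha0 : ∀ k, 0 ≤ a k) (ha1 : ∀ k, a k ≤ 1)
    (hab : ∀ k, a (K + k) ≤ b k) (N : ℕ) :
    ∑ k ∈ Finset.range N, a k ≤ K + ∑ k ∈ Finset.range N, b k := by
  calc ∑ k ∈ Finset.range N, a k ≤ ∑ k ∈ Finset.range (K + N), a k :=
        Finset.sum_le_sum_of_subset_of_nonneg (Finset.range_subset_range.2 (Nat.le_add_left N K))
          fun k _ _ => ha0 k
    _ = ∑ k ∈ Finset.range K, a k + ∑ k ∈ Finset.range N, a (K + k) := Finset.sum_range_add _ _ _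
    _ ≤ ∑ _k ∈ Finset.range K, (1 : ℝ) + ∑ k ∈ Finset.range N, b k :=
        add_le_add (Finset.sum_le_sum fun k _ => ha1 k) (Finset.sum_le_sum fun k _ => hab k)
    _ = K + ∑ k ∈ Finset.range N, b k := by simp

lemma sum_range_le_block_average_mul (hn : 0 < n) (hb0 : ∀ k, 0 ≤ b k) (N : ℕ) :
    ∑ k ∈ Finset.range N, b k ≤ (∑ k ∈ Finset.range (n * (N / n + 1)), b k) /
      (n * (N / n + 1) : ℕ) * (N + n) := by
  have hlt : N < n * (N / n + 1) := Nat.lt_mul_div_succ N hn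
  have hle : n * (N / n + 1) ≤ N + n := by
    rw [Nat.mul_succ]; exact Nat.add_le_add_right (Nat.mul_div_le N n) n
  calc ∑ k ∈ Finset.range N, b k ≤ ∑ k ∈ Finset.range (n * (N / n + 1)), b k :=
        Finset.sum_le_sum_of_subset_of_nonneg (Finset.range_subset_range.2 hlt.le)
          fun k _ _ => hb0 k
    _ = (∑ k ∈ Finset.range (n * (N / n + 1)), b k) / (n * (N / n + 1) : ℕ) *
          (n * (N / n + 1) : ℕ) :=
        (div_mul_cancel₀ _ (by exact_mod_cast (N.zero_le.trans_lt hlt).ne')).symm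
    _ ≤ _ := mul_le_mul_of_nonneg_left (by exact_mod_cast hle)
        (div_nonneg (Finset.sum_nonneg fun k _ => hb0 k) (Nat.cast_nonneg _))

lemma limsup_average_le_of_residues (hn : 0 < n) (ha0 : ∀ k, 0 ≤ a k) (ha1 : ∀ k, a k ≤ 1)
    (hb0 : ∀ k, 0 ≤ b k) (hab : ∀ k, a (K + k) ≤ b k)
    (hb : ∀ r < n, Tendsto (fun M : ℕ => (∑ j ∈ Finset.range M, b (n * j + r)) / M) atTop
      (𝓝 c)) :
    limsup (fun N : ℕ => (∑ k ∈ Finset.range N, a k) / (N : ℝ)) atTop ≤ c := by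
  let u : ℕ → ℝ := fun M => (∑ k ∈ Finset.range (n * M), b k) / (n * M : ℕ)
  have hblock : Tendsto (fun N => u (N / n + 1)) atTop (𝓝 c) :=
    (tendsto_average_mul_of_residues hn hb).comp
      ((tendsto_add_atTop_nat 1).comp (Nat.tendsto_div_const_atTop hn.ne'))
  have hlim : Tendsto (fun N : ℕ => (K : ℝ) / N + u (N / n + 1) * (1 + n / N)) atTop (𝓝 c) := by
    simpa using (tendsto_const_div_atTop_nhds_zero_nat (K : ℝ)).add
      (hblock.mul ((tendsto_const_div_atTop_nhds_zero_nat (n : ℝ)).const_add 1))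
  have hbound : ∀ N : ℕ, 0 < N →
      (∑ k ∈ Finset.range N, a k) / (N : ℝ) ≤ K / N + u (N / n + 1) * (1 + n / N) := by
    intro N hN
    calc (∑ k ∈ Finset.range N, a k) / (N : ℝ) ≤ (K + u (N / n + 1) * (N + n)) / N := by
          gcongr
          exact (sum_range_le_add_sum_range_of_le_one ha0 ha1 hab N).trans
            (by gcongr; exact sum_range_le_block_average_mul hn hb0 N)
      _ = K / N + u (N / n + 1) * (1 + n / N) := by field_simp
  rw [← hlim.limsup_eq]
  refine limsup_le_limsup ?_ ?_ hlim.isBoundedUnder_le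
  · filter_upwards [eventually_gt_atTop 0] with N hN using hbound N hN
  · exact (isBoundedUnder_of ⟨0, fun N => div_nonneg (Finset.sum_nonneg fun k _ => ha0 k)
      (Nat.cast_nonneg N)⟩).isCoboundedUnder_le

end BlockAverages

section VisitFrequency

lemma limsup_visitFreq_le_of_mem_zeroRun {X : Type*} {F : X → X} {V : Set X} {p : X} {ω : Sig2}
    {n T : ℕ} {c : ℝ} (hn : 0 < n) (hV : ∀ k, F^[n + (T + k)] p ∈ V → ω ∈ zeroRun n (T + k))
    (hω : ∀ r, Tendsto (fun M : ℕ =>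
      (∑ j ∈ Finset.range M, (zeroRun n (n * j + r)).indicator (fun _ => (1 : ℝ)) ω) / M) atTop
      (𝓝 c)) :
    limsup (visitFreq F V p) atTop ≤ c := by
  refine limsup_average_le_of_residues (K := n + T)
    (b := fun k => (zeroRun n (T + k)).indicator (fun _ => 1) ω) hn
    (fun k => indicator_nonneg (fun _ _ => zero_le_one) _)
    (fun k => indicator_le_self' (fun _ _ => zero_le_one) _)
    (fun k => indicator_nonneg (fun _ _ => zero_le_one) _) (fun k => ?_) (fun r _ => ?_)
  · by_cases hk : F^[n + T + k] p ∈ V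
    · rw [indicator_of_mem hk, indicator_of_mem (hV k (by rwa [← add_assoc]))]
    · rw [indicator_of_notMem hk]
      exact indicator_nonneg (fun _ _ => zero_le_one) _
  · simpa only [add_left_comm T] using hω (T + r)

lemma ae_limsup_visitFreq_le {E : Type*} [MeasurableSpace E] {μ : Measure E} [SFinite μ]
    {P : Measure Sig2} [IsProbabilityMeasure P] {q : ENNReal}
    (hP : ∀ s : Finset ℤ, P (zerosOn s) = q ^ s.card) {n : ℕ} (hn : 0 < n)
    {f : Sig2 → E → E} {I V : Set E} {A : ℕ → Set E} (hA : Monotone A) (hAI : ∀ i, A i ⊆ I)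
    (hI : ∀ ω, MapsTo (f ω) I I) (htrue : ∀ ω : Sig2, ω 0 = true → MapsTo (f ω) I (A 0))
    (hfalse : ∀ ω : Sig2, ω 0 = false → ∀ i, MapsTo (f ω) (A i) (A (i + 1)))
    (hV : Disjoint V (A (n - 1)))
    (henter : ∀ᵐ p ∂P.prod μ, ∃ T, ((skewProduct shift f)^[T] p).2 ∈ I) :
    ∀ᵐ p ∂P.prod μ,
      limsup (visitFreq (skewProduct shift f) {p | p.2 ∈ V} p) atTop ≤ q.toReal ^ n := by
  have hslln := Measure.quasiMeasurePreserving_fst (μ := P) (ν := μ) |>.ae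
    (ae_all_iff.2 (tendsto_average_zeroRun hP n))
  filter_upwards [hslln, henter] with p hp ⟨T, hT⟩
  exact limsup_visitFreq_le_of_mem_zeroRun hn (fun _ hk =>
    mem_zeroRun_of_skewProduct_shift_iterate_mem hA hAI hI htrue hfalse hV hT hk) hp

end VisitFrequency

section Invisibility

variable {ν θ κ δ : ℝ}

/-- The part of `I = [-ν, 1 + ν]` in which an orbit must lie `i + 1` steps after reading the
symbol `1`, if the symbol `0` contracts distances to `-ν` at most by the factor `θ`. -/
def trap (ν θ : ℝ) (i : ℕ) : Set S1 := arc 2 (-ν + θ ^ i * (3 / 4 + ν)) (1 + ν)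

lemma monotone_trap (hν : 0 ≤ ν) (hθ₀ : 0 ≤ θ) (hθ₁ : θ ≤ 1) : Monotone (trap ν θ) :=
  fun i j hij => arc_subset_arc
    (by gcongr _ + ?_ * _; exact pow_le_pow_of_le_one hθ₀ hθ₁ hij) le_rfl

lemma trap_subset (hν : 0 ≤ ν) (hθ₀ : 0 ≤ θ) (i : ℕ) : trap ν θ i ⊆ arc 2 (-ν) (1 + ν) :=
  arc_subset_arc (le_add_of_nonneg_right (by positivity)) le_rfl

lemma disjoint_trap (hν : ν < 1) {i : ℕ} (hi : 1 / 4 + ν ≤ θ ^ i * (3 / 4 + ν)) :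
    Disjoint ((fun t : ℝ => (t : S1)) '' Ioo 0 (1 / 4)) (trap ν θ i) :=
  disjoint_coe_image_arc (Ioo_subset_Ioo (by linarith) (by linarith)) zero_le_two

lemma mapsTo_arc_of_drift {p c R R' δ : ℝ} {h : AddCircle p → AddCircle p}
    (hI : MapsTo h (arc p (c - R) (c + R)) (arc p (c - R) (c + R)))
    (hup : ∀ x ∈ Icc (c - R') (c - R), ∃ t, x + δ ≤ t ∧ t ≤ c + R ∧ h x = (t : AddCircle p))
    (hdown : ∀ x ∈ Icc (c + R) (c + R'), ∃ t, c - R ≤ t ∧ t ≤ x - δ ∧ h x = (t : AddCircle p))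
    {r : ℝ} (hr : r ∈ Icc R R') :
    MapsTo h (arc p (c - r) (c + r)) (arc p (c - max R (r - δ)) (c + max R (r - δ))) := by
  have hR : R ≤ max R (r - δ) := le_max_left _ _
  have hδ : r - δ ≤ max R (r - δ) := le_max_right _ _
  rintro _ ⟨x, hx, rfl⟩
  rcases le_total x (c - R) with hxl | hxl
  · obtain ⟨t, hxt, htR, hht⟩ := hup x ⟨by linarith [hx.1, hr.2], hxl⟩
    exact ⟨t, ⟨by linarith [hx.1], by linarith⟩, hht.symm⟩
  rcases le_total (c + R) x with hxr | hxr
  · obtain ⟨t, hRt, htx, hht⟩ := hdown x ⟨hxr, by linarith [hx.2, hr.2]⟩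
    exact ⟨t, ⟨by linarith, by linarith [hx.2]⟩, hht.symm⟩
  · exact arc_subset_arc (by linarith) (by linarith) (hI ⟨x, ⟨hxl, hxr⟩, rfl⟩)

lemma exists_iterate_mem_of_notMem_arc {B : Type*} {T : B → B} {f : B → S1 → S1} (hδ : 0 < δ)
    (hν : ν ≤ 1 / 3) (hI : ∀ b, MapsTo (f b) (arc 2 (-ν) (1 + ν)) (arc 2 (-ν) (1 + ν)))
    (hup : ∀ b, ∀ x ∈ Icc (-(1 / 3) : ℝ) (-ν),
      ∃ t : ℝ, x + δ ≤ t ∧ t ≤ 1 + ν ∧ f b (x : S1) = (t : S1))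
    (hdown : ∀ b, ∀ x ∈ Icc (1 + ν) (4 / 3 : ℝ),
      ∃ t : ℝ, -ν ≤ t ∧ t ≤ x - δ ∧ f b (x : S1) = (t : S1))
    {p : B × S1} (hp : p.2 ∉ arc 2 (-(2 / 3)) (-(1 / 3))) :
    ∃ k, ((skewProduct T f)^[k] p).2 ∈ arc 2 (-ν) (1 + ν) := by
  obtain ⟨t, ht, htp⟩ := exists_mem_Ioo_coe_eq_of_notMem_arc hp
  -- `[-1/3, 4/3]` and `[-ν, 1 + ν]` are both centred at `1/2`.
  have hν₁ : (1 / 2 : ℝ) - (1 / 2 + ν) = -ν := by ring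
  have hν₂ : (1 / 2 : ℝ) + (1 / 2 + ν) = 1 + ν := by ring
  have hR₁ : (1 / 2 : ℝ) - 5 / 6 = -(1 / 3) := by norm_num
  have hR₂ : (1 / 2 : ℝ) + 5 / 6 = 4 / 3 := by norm_num
  have hshrink := fun b r hr => mapsTo_arc_of_drift (p := 2) (c := 1 / 2) (R := 1 / 2 + ν)
    (R' := 5 / 6) (h := f b) (r := r) (by rw [hν₁, hν₂]; exact hI b)
    (by rw [hν₁, hν₂, hR₁]; exact hup b) (by rw [hν₁, hν₂, hR₂]; exact hdown b) hr
  obtain ⟨k, hk⟩ := exists_skewProduct_iterate_snd_mem_of_shrinking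
    (D := fun r => arc 2 (1 / 2 - r) (1 / 2 + r)) hδ hshrink (by linarith)
    (p := p) (T := T) ⟨t, ⟨by linarith [ht.1], by linarith [ht.2]⟩, htp⟩
  exact ⟨k, by rwa [hν₁, hν₂] at hk⟩

lemma ae_exists_iterate_mem_arc {B : Type*} [MeasurableSpace B] {P : Measure B} {T : B → B}
    {f : B → S1 → S1} (hf : Measurable (skewProduct T f)) (hν₀ : 0 ≤ ν) (hν : ν < 1 / 3)
    (hκ : 1 < κ) (hδ : 0 < δ)
    (hlift : ∀ b, ∃ ℓ : ℝ → ℝ, IsLift ℓ (f b) ∧ Monotone ℓ ∧ (∀ x, ℓ (x + 2) = ℓ x + 2) ∧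
      Differentiable ℝ ℓ ∧ ∀ x ∈ Icc (-(2 / 3) : ℝ) (-(1 / 3)), κ ≤ deriv ℓ x)
    (hI : ∀ b, MapsTo (f b) (arc 2 (-ν) (1 + ν)) (arc 2 (-ν) (1 + ν)))
    (hup : ∀ b, ∀ x ∈ Icc (-(1 / 3) : ℝ) (-ν),
      ∃ t : ℝ, x + δ ≤ t ∧ t ≤ 1 + ν ∧ f b (x : S1) = (t : S1))
    (hdown : ∀ b, ∀ x ∈ Icc (1 + ν) (4 / 3 : ℝ),
      ∃ t : ℝ, -ν ≤ t ∧ t ≤ x - δ ∧ f b (x : S1) = (t : S1)) :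
    ∀ᵐ p ∂P.prod (volume : Measure S1), ∃ k, ((skewProduct T f)^[k] p).2 ∈ arc 2 (-ν) (1 + ν) := by
  have hIJ : Disjoint (arc 2 (-(2 / 3)) (-(1 / 3))) (arc 2 (-ν) (1 + ν)) :=
    disjoint_coe_image_arc (Icc_subset_Ioo (by linarith) (by linarith)) zero_le_two
  have h0 : ((0 : ℝ) : S1) ∈ arc 2 (-ν) (1 + ν) := ⟨0, ⟨by linarith, by linarith⟩, rfl⟩
  have hexpand : ∀ b, ∀ x ∈ arc 2 (-(2 / 3)) (-(1 / 3)), ∀ y ∈ arc 2 (-(2 / 3)) (-(1 / 3)),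
      f b x ∈ arc 2 (-(2 / 3)) (-(1 / 3)) → f b y ∈ arc 2 (-(2 / 3)) (-(1 / 3)) →
      κ * dist x y ≤ dist (f b x) (f b y) := by
    intro b x hx y hy hfx hfy
    obtain ⟨ℓ, hℓ, hmono, hdeg, hdiff, hderiv⟩ := hlift b
    exact hℓ.mul_dist_le_dist hmono hdeg hdiff hderiv (by norm_num)
      (hIJ.notMem_of_mem_right h0) (hIJ.notMem_of_mem_right (hI b h0)) hx hy hfx hfy
  filter_upwards [ae_exists_skewProduct_iterate_snd_notMem (P := P) (μ := (volume : Measure S1)) hf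
    isClosed_arc.measurableSet isClosed_arc.isCompact.isBounded hκ hexpand] with p ⟨j, hj⟩
  obtain ⟨k, hk⟩ := exists_iterate_mem_of_notMem_arc hδ hν.le hI hup hdown hj
  exact ⟨k + j, by rwa [Function.iterate_add_apply]⟩

lemma quarter_add_le_one_sub_pow_mul {n : ℕ} (hn : 100 ≤ n) (hν : ν = 1 / n) :
    1 / 4 + ν ≤ (1 - ν) ^ (n - 1) * (3 / 4 + ν) := by
  obtain ⟨m, rfl⟩ := Nat.exists_eq_add_of_le' (by omega : 1 ≤ n)
  have hm : (99 : ℝ) ≤ m := by exact_mod_cast (by omega : 99 ≤ m)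
  have hν₁ : ν ≤ 1 / 100 := by
    rw [hν]; exact one_div_le_one_div_of_le (by norm_num) (by exact_mod_cast hn)
  have hinv : 1 - ν = (1 + (m : ℝ)⁻¹)⁻¹ := by
    rw [hν]; push_cast; field_simp; ring
  have hpow : (1 + (m : ℝ)⁻¹) ^ m ≤ Real.exp 1 := Real.one_add_inv_pow_le_exp
  have hlow : (0.36 : ℝ) ≤ (1 - ν) ^ m := by
    rw [hinv, inv_pow, le_inv_comm₀ (by norm_num) (by positivity)]
    exact (hpow.trans Real.exp_one_lt_d9.le).trans (by norm_num)
  have hν₀ : 0 ≤ ν := by rw [hν]; positivity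
  rw [Nat.add_sub_cancel]
  nlinarith [mul_le_mul_of_nonneg_right hlow (by linarith : 0 ≤ 3 / 4 + ν)]

lemma continuous_skewProduct_shift {X : Type*} [TopologicalSpace X] [LocallyCompactSpace X]
    {f : Sig2 → C(X, X)} (hf : Continuous f) :
    Continuous (skewProduct shift fun ω => f ω) :=
  (continuous_pi fun k => (continuous_apply (k + 1)).comp continuous_fst).prodMk
    ((hf.comp continuous_fst).eval continuous_snd)

theorem stmt_11_general {n : ℕ} (hn : 0 < n) (hν₀ : 0 ≤ ν) (hν : ν < 1 / 3) (hθ₀ : 0 ≤ θ)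
    (hθ₁ : θ ≤ 1) (hθn : 1 / 4 + ν ≤ θ ^ (n - 1) * (3 / 4 + ν)) (hκ : 1 < κ) (hδ : 0 < δ)
    {g : Sig2 → S1 → S1} (hg : Measurable (skewProduct shift g))
    (hlift : ∀ ω, ∃ ℓ : ℝ → ℝ, IsLift ℓ (g ω) ∧ Monotone ℓ ∧ (∀ x, ℓ (x + 2) = ℓ x + 2) ∧
      Differentiable ℝ ℓ ∧ (ω 0 = false → ∀ x ∈ Icc (-ν) (1 + ν), θ ≤ deriv ℓ x) ∧
      ∀ x ∈ Icc (-(2 / 3) : ℝ) (-(1 / 3)), κ ≤ deriv ℓ x)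
    (hI : ∀ ω, MapsTo (g ω) (arc 2 (-ν) (1 + ν)) (arc 2 (-ν) (1 + ν)))
    (hone : ∀ ω : Sig2, ω 0 = true → g ω ((-ν : ℝ) : S1) ∈ arc 2 (3 / 4) (1 + ν))
    (hup : ∀ ω, ∀ x ∈ Icc (-(1 / 3) : ℝ) (-ν),
      ∃ t : ℝ, x + δ ≤ t ∧ t ≤ 1 + ν ∧ g ω (x : S1) = (t : S1))
    (hdown : ∀ ω, ∀ x ∈ Icc (1 + ν) (4 / 3 : ℝ),
      ∃ t : ℝ, -ν ≤ t ∧ t ≤ x - δ ∧ g ω (x : S1) = (t : S1))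
    {P : Measure Sig2} [IsProbabilityMeasure P] {q : ENNReal}
    (hP : ∀ s : Finset ℤ, P (zerosOn s) = q ^ s.card) :
    ∀ᵐ p ∂P.prod (volume : Measure S1), limsup (visitFreq (skewProduct shift g)
      {p | p.2 ∈ (fun t : ℝ => (t : S1)) '' Ioo 0 (1 / 4)} p) atTop ≤ q.toReal ^ n := by
  have hab : -ν ≤ 1 + ν := by linarith
  have hba : 1 + ν < -ν + 2 := by linarith
  have htrue : ∀ ω : Sig2, ω 0 = true → MapsTo (g ω) (arc 2 (-ν) (1 + ν)) (trap ν θ 0) := by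
    intro ω hω
    obtain ⟨ℓ, hℓ, hmono, -, hdiff, -⟩ := hlift ω
    rw [trap, pow_zero, one_mul, neg_add_cancel_comm_assoc]
    exact hℓ.mapsTo_arc_of_monotone hdiff.continuous hmono hab hba (hI ω) (by linarith) (hone ω hω)
  have hfalse : ∀ ω : Sig2, ω 0 = false → ∀ i, MapsTo (g ω) (trap ν θ i) (trap ν θ (i + 1)) := by
    intro ω hω i
    obtain ⟨ℓ, hℓ, -, -, hdiff, hderiv, -⟩ := hlift ω
    rw [trap, trap, pow_succ', mul_assoc]
    simpa using hℓ.mapsTo_arc_of_le_deriv hdiff hba (hI ω) hθ₀ (hderiv hω)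
      (le_add_of_nonneg_right (by positivity : 0 ≤ θ ^ i * (3 / 4 + ν)))
  refine ae_limsup_visitFreq_le hP hn (monotone_trap hν₀ hθ₀ hθ₁) (trap_subset hν₀ hθ₀) hI htrue
    hfalse (disjoint_trap (by linarith) hθn)
    (ae_exists_iterate_mem_arc hg hν₀ hν hκ hδ (fun ω => ?_) hI hup hdown)
  obtain ⟨ℓ, hℓ, hmono, hdeg, hdiff, -, hderiv⟩ := hlift ω
  exact ⟨ℓ, hℓ, hmono, hdeg, hdiff, hderiv⟩

end Invisibility

/-- Fix `n ≥ 100`, `ν = 1/n`, and let `I = [−ν,1+ν]`, `J = [−2/3,−1/3]`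
be the corresponding arcs of `S¹ = ℝ/2ℤ`. Let `G(ω,x) = (σω, g_ω x)` be a skew product
whose fiber maps are orientation-preserving `C¹` diffeomorphisms depending continuously on
`ω` (C⁰ topology), such that for every `ω`: (i) `g_ω(I) ⊆ I`, on `I` the derivative lies
in `[1−ν,1)` if `ω₀ = 0` and in `(0,1/4]` if `ω₀ = 1`, and `g_ω(−ν) > 3/4` if `ω₀ = 1`;
(ii) `g_ω⁻¹(J) ⊆ J` and the derivative exceeds `1 + ν/2` on `J`; (iii) `g_ω(x) ≥ x + ν²/4`
on `[−1/3,−ν]` and `g_ω(x) ≤ x − ν²/4` on `[1+ν,4/3]`. Then `V = π⁻¹((0,1/4))` is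
`2^{−n}`-invisible for `G` with respect to `P × Leb`. -/
theorem stmt_11 (n : ℕ) (hn : 100 ≤ n) (ν : ℝ) (hν : ν = 1 / (n : ℝ))
    (g : Sig2 → S1 ≃ₜ S1)
    -- each fiber map is an orientation-preserving C¹ diffeomorphism, and the stated
    -- derivative bounds hold (computed via a C¹ lift):
    (hfiber : ∀ ω : Sig2, ∃ G : ℝ → ℝ,
      (∀ x : ℝ, ((G x : ℝ) : S1) = g ω ((x : ℝ) : S1)) ∧
      StrictMono G ∧ (∀ x, G (x + 2) = G x + 2) ∧
      ContDiff ℝ 1 G ∧ (∀ x, 0 < deriv G x) ∧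
      (ω 0 = false → ∀ x ∈ Icc (-ν) (1 + ν), deriv G x ∈ Ico (1 - ν) 1) ∧
      (ω 0 = true → ∀ x ∈ Icc (-ν) (1 + ν), deriv G x ∈ Ioc 0 (1 / 4)) ∧
      (∀ x ∈ Icc (-(2 / 3) : ℝ) (-(1 / 3)), 1 + ν / 2 < deriv G x))
    -- (i) `I` is forward invariant and `g_ω(−ν) > 3/4` when `ω₀ = 1`:
    (hmapsI : ∀ ω, MapsTo (g ω)
      ((fun x : ℝ => ((x : ℝ) : S1)) '' Icc (-ν) (1 + ν))
      ((fun x : ℝ => ((x : ℝ) : S1)) '' Icc (-ν) (1 + ν)))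
    (hone : ∀ ω : Sig2, ω 0 = true →
      ∃ t : ℝ, 3 / 4 < t ∧ t ≤ 1 + ν ∧ g ω (((-ν : ℝ) : S1)) = ((t : ℝ) : S1))
    -- (ii) `J` is backward invariant:
    (hmapsJ : ∀ ω, MapsTo (g ω).symm
      ((fun x : ℝ => ((x : ℝ) : S1)) '' Icc (-(2 / 3) : ℝ) (-(1 / 3)))
      ((fun x : ℝ => ((x : ℝ) : S1)) '' Icc (-(2 / 3) : ℝ) (-(1 / 3))))
    -- (iii) one-way motion between `J` and `I`:
    (hup : ∀ ω : Sig2, ∀ x ∈ Icc (-(1 / 3) : ℝ) (-ν),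
      ∃ t : ℝ, x + ν ^ 2 / 4 ≤ t ∧ t ≤ 1 + ν ∧ g ω ((x : ℝ) : S1) = ((t : ℝ) : S1))
    (hdown : ∀ ω : Sig2, ∀ x ∈ Icc (1 + ν) (4 / 3 : ℝ),
      ∃ t : ℝ, -ν ≤ t ∧ t ≤ x - ν ^ 2 / 4 ∧ g ω ((x : ℝ) : S1) = ((t : ℝ) : S1))
    -- (continuity of `ω ↦ g_ω` in the C⁰ topology):
    (hcont : Continuous fun ω => ((g ω : C(S1, S1))))
    -- `P` is the Bernoulli measure on `Σ²`:
    (P : Measure Sig2) [IsProbabilityMeasure P]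
    (hP : ∀ (s : Finset ℤ) (α : ℤ → Bool),
      P {ω : Sig2 | ∀ i ∈ s, ω i = α i} = (1 / 2 : ENNReal) ^ s.card) :
    ∀ᵐ p ∂(P.prod (volume : Measure S1)),
      limsup (fun N : ℕ => visitFreq (skew g)
        {q : Sig2 × S1 | q.2 ∈ (fun t : ℝ => ((t : ℝ) : S1)) '' Ioo 0 (1 / 4)} p N)
        atTop ≤ (1 / 2 : ℝ) ^ n := by
  have hn' : (100 : ℝ) ≤ n := by exact_mod_cast hn
  have hν₀ : 0 < ν := by rw [hν]; positivity
  have hν₁ : ν ≤ 1 / 100 := by rw [hν]; exact one_div_le_one_div_of_le (by norm_num) hn'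
  have h := stmt_11_general (θ := 1 - ν) (κ := 1 + ν / 2) (g := fun ω => g ω) (P := P)
    (by omega) hν₀.le (by linarith) (by linarith) (by linarith)
    (quarter_add_le_one_sub_pow_mul hn hν) (by linarith) (by positivity : 0 < ν ^ 2 / 4)
    (continuous_skewProduct_shift hcont).measurable
    (fun ω => ?_) hmapsI (fun ω hω => ?_) hup hdown (fun s => hP s fun _ => false)
  · rw [(by simp : (1 / 2 : ENNReal).toReal = 1 / 2)] at h
    exact h
  · obtain ⟨ℓ, hℓ, hmono, hdeg, hdiff, -, hzero, -, hJ⟩ := hfiber ω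
    exact ⟨ℓ, hℓ, hmono.monotone, hdeg, hdiff.differentiable one_ne_zero,
      fun hω x hx => (hzero hω x hx).1, fun x hx => (hJ x hx).le⟩
  · obtain ⟨t, ht, htI, hgt⟩ := hone ω hω
    exact ⟨t, ⟨ht.le, htI⟩, hgt.symm⟩
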